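/- arXiv:2208.08899 — 2 statements merged into one kernel-verified Lean document; each statement's English description precedes it below -/
import Mathlib

section
/- Let K be a number field with ring of integers A, let s, π ∈ A with s ≠ 0 and C(X) = X² − sX + π with discriminant Δ = s² − 4π not a square in K. Let U, V : ℕ → A be two sequences of class C. If for every prime ideal P of A with Δ ∉ P one has U_p ≡ V_p (mod P) where p := |A/P|, then U_n = V_n for all n ∈ ℕ. -/
open NumberField

/-!
For `W = U - V` of class `C` and a prime `P ∤ 2Δ` with residue field of cardinality `p`, write the
terms of `W` modulo `P` through the powers of `s + √Δ`. The `p`-th power map fixes `√Δ` or negates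
it according to whether `Δ` is a square modulo `P`, so that `W_p ≡ W_1` or `W_p ≡ s W_0 - W_1`.
Since `W_p ≡ 0`, it is enough that infinitely many `P` are of each kind: an element of `𝓞 K` lying
in infinitely many primes is `0`, so `W_1 = 0` and `s W_0 = W_1`.

Infinitely many `P` make `Δ` a square: take a prime divisor of `Δ b² k² - 1`, where the nonzero
multiple `b` avoids a given finite set of primes and `k` is large enough for this element not to
be a unit. Infinitely many make it a nonsquare: otherwise almost every `P` has two primes of the
same norm above it in `L = K(√Δ)`, so `ζ_K(x)²` is at most a constant times `ζ_L(x)` for `x > 1`;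
as `x → 1` this puts a double pole below a simple one.
-/

section Recurrence

variable {R S : Type*} [CommRing R] [CommRing S] {s π : R} {U V : ℕ → R}

/-- The paper's "sequence of class `C`" for `C = X² - sX + π`. -/
def IsOfClass (s π : R) (U : ℕ → R) : Prop :=
  ∀ n, U (n + 2) - s * U (n + 1) + π * U n = 0

namespace IsOfClass

lemma sub (hU : IsOfClass s π U) (hV : IsOfClass s π V) : IsOfClass s π (U - V) := fun n ↦ by
  simp only [Pi.sub_apply]
  linear_combination hU n - hV n

lemma map (f : R →+* S) (hU : IsOfClass s π U) : IsOfClass (f s) (f π) (f ∘ U) := fun n ↦ by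
  simpa using congrArg f (hU n)

lemma eq_zero (hU : IsOfClass s π U) (h₀ : U 0 = 0) (h₁ : U 1 = 0) : U = 0 := by
  funext n
  induction n using Nat.twoStepInduction with
  | zero => exact h₀
  | one => exact h₁
  | more n ih₀ ih₁ => simpa [ih₀, ih₁] using hU n

lemma two_pow_mul_eq (hU : IsOfClass s π U) (n : ℕ) :
    2 ^ n * U n = U 0 * ((⟨s, 1⟩ : QuadraticAlgebra R (s ^ 2 - 4 * π) 0) ^ n).re +
      (2 * U 1 - s * U 0) * ((⟨s, 1⟩ : QuadraticAlgebra R (s ^ 2 - 4 * π) 0) ^ n).im := by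
  induction n using Nat.twoStepInduction with
  | zero => simp [QuadraticAlgebra.re_one, QuadraticAlgebra.im_one]
  | one => simp only [pow_one]; ring
  | more n ih₀ ih₁ =>
    simp only [pow_succ (⟨s, 1⟩ : QuadraticAlgebra R (s ^ 2 - 4 * π) 0),
      QuadraticAlgebra.re_mul, QuadraticAlgebra.im_mul] at ih₁ ⊢
    linear_combination 2 ^ (n + 2) * hU n + 2 * s * ih₁ - 4 * π * ih₀

end IsOfClass

end Recurrence

section FiniteField

open QuadraticAlgebra

variable {F : Type*} [Field F] [Fintype F]

lemma quadraticAlgebra_mk_pow_card (hF : ringChar F ≠ 2) (D x y : F) :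
    (⟨x, y⟩ : QuadraticAlgebra F D 0) ^ Fintype.card F =
      ⟨x, y * D ^ (Fintype.card F / 2)⟩ := by
  let frob := FiniteField.frobeniusAlgHom F (QuadraticAlgebra F D 0)
  have hodd : 2 * (Fintype.card F / 2) + 1 = Fintype.card F :=
    Nat.two_mul_div_two_add_one_of_odd (Nat.odd_iff.2 (FiniteField.odd_card_of_char_ne_two hF))
  have omega_sq : (ω : QuadraticAlgebra F D 0) ^ 2 = algebraMap F _ D := by
    rw [sq, omega_mul_omega_eq_mk, algebraMap_eq]
  have frob_omega : frob ω = D ^ (Fintype.card F / 2) • ω :=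
    calc frob ω = (ω ^ 2) ^ (Fintype.card F / 2) * ω := by
          rw [← pow_mul, ← pow_succ, hodd]; rfl
      _ = D ^ (Fintype.card F / 2) • ω := by rw [omega_sq, ← map_pow, Algebra.smul_def]
  calc (⟨x, y⟩ : QuadraticAlgebra F D 0) ^ Fintype.card F
      = frob (algebraMap F _ x + y • ω) := by rw [← mk_eq_add_smul_omega]; rfl
    _ = algebraMap F _ x + (y * D ^ (Fintype.card F / 2)) • ω := by
        rw [map_add, map_smul, frob.commutes, frob_omega, smul_smul]
    _ = ⟨x, y * D ^ (Fintype.card F / 2)⟩ := (mk_eq_add_smul_omega _ _).symm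

namespace IsOfClass

variable {s π : F} {U : ℕ → F}

lemma two_mul_apply_card (hU : IsOfClass s π U) (hF : ringChar F ≠ 2) :
    2 * U (Fintype.card F) =
      s * U 0 + (s ^ 2 - 4 * π) ^ (Fintype.card F / 2) * (2 * U 1 - s * U 0) := by
  have h := hU.two_pow_mul_eq (Fintype.card F)
  rw [quadraticAlgebra_mk_pow_card hF, FiniteField.pow_card] at h
  linear_combination h

lemma apply_card_of_isSquare (hU : IsOfClass s π U) (hF : ringChar F ≠ 2)
    (hD₀ : s ^ 2 - 4 * π ≠ 0) (hD : IsSquare (s ^ 2 - 4 * π)) : U (Fintype.card F) = U 1 := by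
  have h := hU.two_mul_apply_card hF
  rw [(FiniteField.isSquare_iff hF hD₀).1 hD] at h
  refine mul_left_cancel₀ (Ring.two_ne_zero hF) ?_
  linear_combination h

lemma apply_card_of_not_isSquare (hU : IsOfClass s π U) (hF : ringChar F ≠ 2)
    (hD : ¬IsSquare (s ^ 2 - 4 * π)) : U (Fintype.card F) = s * U 0 - U 1 := by
  have hD₀ : s ^ 2 - 4 * π ≠ 0 := fun h ↦ hD (h ▸ IsSquare.zero)
  have hpow := (FiniteField.pow_dichotomy hF hD₀).resolve_left
    (mt (FiniteField.isSquare_iff hF hD₀).2 hD)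
  have h := hU.two_mul_apply_card hF
  rw [hpow] at h
  refine mul_left_cancel₀ (Ring.two_ne_zero hF) ?_
  linear_combination h

end IsOfClass

end FiniteField

section Residue

variable {A : Type*} [CommRing A] {I : Ideal A}

lemma ringChar_quotient_ne_two (h : 2 ∉ I) : ringChar (A ⧸ I) ≠ 2 := fun hchar ↦ by
  have two_eq_zero := hchar ▸ ringChar.Nat.cast_ringChar (R := A ⧸ I)
  exact h (Ideal.Quotient.eq_zero_iff_mem.1 two_eq_zero)

namespace IsOfClass

variable [I.IsMaximal] [Finite (A ⧸ I)] {s π : A} {U : ℕ → A}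

lemma apply_card_quotient_sub_mem_of_isSquare (hU : IsOfClass s π U) (h2 : 2 ∉ I)
    (hDI : s ^ 2 - 4 * π ∉ I) (hD : IsSquare (Ideal.Quotient.mk I (s ^ 2 - 4 * π))) :
    U (Nat.card (A ⧸ I)) - U 1 ∈ I := by
  let := Ideal.Quotient.field I
  have := Fintype.ofFinite (A ⧸ I)
  rw [← Ideal.Quotient.eq_zero_iff_mem] at hDI
  simp only [map_sub, map_mul, map_pow, map_ofNat] at hD hDI
  rw [Nat.card_eq_fintype_card, ← Ideal.Quotient.mk_eq_mk_iff_sub_mem]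
  exact (hU.map (Ideal.Quotient.mk I)).apply_card_of_isSquare
    (ringChar_quotient_ne_two h2) hDI hD

lemma apply_card_quotient_sub_mem_of_not_isSquare (hU : IsOfClass s π U) (h2 : 2 ∉ I)
    (hD : ¬IsSquare (Ideal.Quotient.mk I (s ^ 2 - 4 * π))) :
    U (Nat.card (A ⧸ I)) - (s * U 0 - U 1) ∈ I := by
  let := Ideal.Quotient.field I
  have := Fintype.ofFinite (A ⧸ I)
  simp only [map_sub, map_mul, map_pow, map_ofNat] at hD
  rw [Nat.card_eq_fintype_card, ← Ideal.Quotient.mk_eq_mk_iff_sub_mem, map_sub, map_mul]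
  exact (hU.map (Ideal.Quotient.mk I)).apply_card_of_not_isSquare (ringChar_quotient_ne_two h2) hD

end IsOfClass

end Residue

section EulerSum

open scoped ENNReal

variable {ι κ : Type*}

/-- The Euler product `∏ i, (1 - w i)⁻¹`, expanded as a sum over the free commutative monoid on
`ι`. -/
noncomputable def eulerSum (w : ι → ℝ≥0∞) : ℝ≥0∞ :=
  ∑' m : Multiset ι, (m.map w).prod

lemma eulerSum_mono {v w : ι → ℝ≥0∞} (h : v ≤ w) : eulerSum v ≤ eulerSum w :=
  ENNReal.tsum_le_tsum fun _ ↦ Multiset.prod_map_le_prod_map _ _ fun i _ ↦ h i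

lemma eulerSum_comp_le {f : ι → κ} (hf : f.Injective) (w : κ → ℝ≥0∞) :
    eulerSum (w ∘ f) ≤ eulerSum w := by
  simpa only [eulerSum, Multiset.map_map] using
    ENNReal.tsum_comp_le_tsum_of_injective (Multiset.map_injective hf) fun m ↦ (m.map w).prod

lemma eulerSum_comp_equiv (e : ι ≃ κ) (w : κ → ℝ≥0∞) : eulerSum (w ∘ e) = eulerSum w := by
  refine (eulerSum_comp_le e.injective w).antisymm ?_
  simpa [Function.comp_def] using eulerSum_comp_le e.symm.injective (w ∘ e)

lemma bijective_disjSum :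
    Function.Bijective fun m : Multiset ι × Multiset κ ↦ m.1.disjSum m.2 := by
  constructor
  · refine Function.LeftInverse.injective
      (g := fun m ↦ (m.filterMap Sum.getLeft?, m.filterMap Sum.getRight?)) fun ⟨s, t⟩ ↦ ?_
    ext : 1 <;> simpa [Multiset.disjSum, Multiset.filterMap_add, Multiset.filterMap_map,
      Function.comp_def] using Multiset.eq_zero_of_forall_notMem (by simp)
  · intro m
    induction m using Multiset.induction with
    | empty => exact ⟨0, rfl⟩
    | cons a m ih =>
      obtain ⟨⟨s, t⟩, rfl⟩ := ih
      cases a with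
      | inl i => exact ⟨(i ::ₘ s, t), by simp [Multiset.disjSum]⟩
      | inr j => exact ⟨(s, j ::ₘ t), by simp [Multiset.disjSum]⟩

lemma eulerSum_sumElim (v : ι → ℝ≥0∞) (w : κ → ℝ≥0∞) :
    eulerSum (Sum.elim v w) = eulerSum v * eulerSum w :=
  calc eulerSum (Sum.elim v w)
      = ∑' m : Multiset ι × Multiset κ, (m.1.map v).prod * (m.2.map w).prod := by
        rw [eulerSum, ← (Equiv.ofBijective _ bijective_disjSum).tsum_eq]
        simp [Multiset.map_disjSum]
    _ = eulerSum v * eulerSum w := by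
        simp_rw [ENNReal.tsum_prod', ENNReal.tsum_mul_left, ENNReal.tsum_mul_right, eulerSum]

lemma eulerSum_of_isEmpty [IsEmpty ι] (w : ι → ℝ≥0∞) : eulerSum w = 1 := by
  have : Unique (Multiset ι) := ⟨⟨0⟩, fun m ↦ Multiset.eq_zero_of_forall_notMem isEmptyElim⟩
  rw [eulerSum, tsum_eq_single 0 fun m hm ↦ absurd (Subsingleton.elim m 0) hm]
  simp

lemma eulerSum_of_unique [Unique ι] (w : ι → ℝ≥0∞) : eulerSum w = (1 - w default)⁻¹ := by
  let e : ℕ ≃ Multiset ι :=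
    { toFun n := .replicate n default
      invFun := Multiset.card
      left_inv n := Multiset.card_replicate n default
      right_inv m := (Multiset.eq_replicate_card.2 fun i _ ↦ Subsingleton.elim i default).symm }
  rw [eulerSum, ← e.tsum_eq, ← ENNReal.tsum_geometric]
  simp [e]

lemma eulerSum_ne_top [Finite ι] {w : ι → ℝ≥0∞} (hw : ∀ i, w i < 1) : eulerSum w ≠ ∞ := by
  induction ι using Finite.induction_empty_option with
  | of_equiv e ih => exact eulerSum_comp_equiv e w ▸ ih fun i ↦ hw (e i)
  | h_empty => simp [eulerSum_of_isEmpty]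
  | @h_option ι _ ih =>
    rw [← eulerSum_comp_equiv (Equiv.optionEquivSumPUnit.{0} ι).symm,
      ← Sum.elim_comp_inl_inr (w ∘ _), eulerSum_sumElim, eulerSum_of_unique (ι := PUnit)]
    exact ENNReal.mul_ne_top (ih fun i ↦ hw _)
      (ENNReal.inv_ne_top.2 (tsub_pos_of_lt (hw _)).ne')

lemma eulerSum_eq_mul_compl (s : Set ι) (w : ι → ℝ≥0∞) :
    eulerSum w = eulerSum (fun i : s ↦ w i) * eulerSum (fun i : ↥sᶜ ↦ w i) := by
  classical
  rw [← eulerSum_comp_equiv (Equiv.Set.sumCompl s), ← eulerSum_sumElim]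
  congr 1
  ext (i | i) <;> simp

end EulerSum

section DedekindDomain

open IsDedekindDomain Filter UniqueFactorizationMonoid
open scoped ENNReal

variable {A : Type*} [CommRing A] [IsDedekindDomain A]

lemma eventually_notMem_asIdeal {x : A} (hx : x ≠ 0) :
    ∀ᶠ v : HeightOneSpectrum A in cofinite, x ∉ v.asIdeal := by
  simpa [Ideal.dvd_span_singleton] using Ideal.finite_factors (I := Ideal.span {x}) (by simpa)

lemma eq_zero_of_frequently_mem_asIdeal {x : A}
    (h : ∃ᶠ v : HeightOneSpectrum A in cofinite, x ∈ v.asIdeal) : x = 0 := by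
  by_contra hx
  exact h (eventually_notMem_asIdeal hx)

lemma frequently_of_forall_exists_notMem {p : HeightOneSpectrum A → Prop}
    (h : ∀ b : A, b ≠ 0 → ∃ v : HeightOneSpectrum A, b ∉ v.asIdeal ∧ p v) :
    ∃ᶠ v in cofinite, p v := by
  refine mt eventually_cofinite.1 fun hfin ↦ ?_
  have prod_ne_bot : ∏ v ∈ hfin.toFinset, v.asIdeal ≠ ⊥ :=
    Finset.prod_ne_zero_iff.2 fun v _ ↦ v.ne_bot
  obtain ⟨b, hb, hb₀⟩ := Submodule.exists_mem_ne_zero_of_ne_bot prod_ne_bot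
  obtain ⟨v, hbv, hv⟩ := h b hb₀
  exact hbv (Ideal.le_of_dvd (Finset.dvd_prod_of_mem _ (by simpa using hv)) hb)

lemma injective_prod_map_asIdeal :
    Function.Injective fun m : Multiset (HeightOneSpectrum A) ↦
      (m.map HeightOneSpectrum.asIdeal).prod := by
  classical
  refine .of_comp (f := normalizedFactors) ?_
  have factors_prod : (normalizedFactors ∘ fun m : Multiset (HeightOneSpectrum A) ↦
      (m.map HeightOneSpectrum.asIdeal).prod) = Multiset.map HeightOneSpectrum.asIdeal := by
    refine funext fun m ↦ normalizedFactors_prod_of_prime fun p hp ↦ ?_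
    obtain ⟨v, -, rfl⟩ := Multiset.mem_map.1 hp
    exact v.prime
  rw [factors_prod]
  exact Multiset.map_injective HeightOneSpectrum.asIdeal_injective

lemma exists_prod_map_asIdeal_eq {I : Ideal A} (hI : I ≠ ⊥) :
    ∃ m : Multiset (HeightOneSpectrum A), (m.map HeightOneSpectrum.asIdeal).prod = I := by
  induction I using induction_on_prime with
  | h₁ => exact absurd rfl hI
  | h₂ I hunit => exact ⟨0, by simpa using (Ideal.isUnit_iff.1 hunit).symm⟩
  | h₃ I P hI₀ hP ih =>
    obtain ⟨m, rfl⟩ := ih hI₀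
    exact ⟨⟨P, Ideal.isPrime_of_prime hP, hP.ne_zero⟩ ::ₘ m, by simp⟩

lemma eulerSum_asIdeal (f : Ideal A →* ℝ≥0∞) (hf : f ⊥ = 0) :
    eulerSum (fun v : HeightOneSpectrum A ↦ f v.asIdeal) = ∑' I, f I := by
  rw [← injective_prod_map_asIdeal.tsum_eq]
  · simp [eulerSum, map_multiset_prod]
  · intro I hI
    exact exists_prod_map_asIdeal_eq fun h ↦ hI (h ▸ hf)

end DedekindDomain

section Zeta

open Filter Topology IsDedekindDomain
open scoped ENNReal

variable (K : Type*) [Field K] [NumberField K]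

/-- The summand of the Dedekind zeta function at the real point `x`, valued in `ℝ≥0∞` so that its
sums need no summability side conditions; at the zero ideal it is `0` unless `x = 0`. -/
noncomputable def zetaTerm (x : ℝ) : Ideal (𝓞 K) →* ℝ≥0∞ where
  toFun I := ENNReal.ofReal ((Ideal.absNorm I : ℝ) ^ (-x))
  map_one' := by simp
  map_mul' I J := by
    rw [map_mul, Nat.cast_mul, Real.mul_rpow (by positivity) (by positivity),
      ENNReal.ofReal_mul (by positivity)]

variable {K}

lemma zetaTerm_apply (x : ℝ) (I : Ideal (𝓞 K)) :
    zetaTerm K x I = ENNReal.ofReal ((Ideal.absNorm I : ℝ) ^ (-x)) := rfl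

lemma two_le_absNorm_asIdeal (v : HeightOneSpectrum (𝓞 K)) : 2 ≤ Ideal.absNorm v.asIdeal := by
  have h₀ : Ideal.absNorm v.asIdeal ≠ 0 := Ideal.absNorm_eq_zero_iff.not.2 v.ne_bot
  have h₁ : Ideal.absNorm v.asIdeal ≠ 1 := Ideal.absNorm_eq_one_iff.not.2 v.isPrime.ne_top
  omega

lemma zetaTerm_asIdeal_lt_one {x : ℝ} (hx : 0 < x) (v : HeightOneSpectrum (𝓞 K)) :
    zetaTerm K x v.asIdeal < 1 := by
  rw [zetaTerm_apply, ENNReal.ofReal_lt_one]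
  exact Real.rpow_lt_one_of_one_lt_of_neg (mod_cast two_le_absNorm_asIdeal v) (by linarith)

lemma zetaTerm_asIdeal_anti {x y : ℝ} (hxy : x ≤ y) (v : HeightOneSpectrum (𝓞 K)) :
    zetaTerm K y v.asIdeal ≤ zetaTerm K x v.asIdeal := by
  refine ENNReal.ofReal_le_ofReal (Real.rpow_le_rpow_of_exponent_le ?_ (by linarith))
  exact_mod_cast one_le_two.trans (two_le_absNorm_asIdeal v)

lemma eulerSum_zetaTerm {x : ℝ} (hx : x ≠ 0) :
    eulerSum (fun v : HeightOneSpectrum (𝓞 K) ↦ zetaTerm K x v.asIdeal) =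
      ∑' I, zetaTerm K x I :=
  eulerSum_asIdeal _ (by simp [zetaTerm_apply, hx])

variable (K)

lemma tsum_zetaTerm {x : ℝ} :
    ∑' I, zetaTerm K x I =
      ∑' n : ℕ, ENNReal.ofReal (Nat.card {I : Ideal (𝓞 K) // Ideal.absNorm I = n} *
        (n : ℝ) ^ (-x)) := by
  rw [← ENNReal.tsum_fiberwise _ Ideal.absNorm]
  refine tsum_congr fun n ↦ ?_
  have : Finite (Ideal.absNorm ⁻¹' {n} : Set (Ideal (𝓞 K))) := Ideal.finite_setOfPred_absNorm_eq n
  have := Fintype.ofFinite (Ideal.absNorm ⁻¹' {n} : Set (Ideal (𝓞 K)))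
  have const (I : (Ideal.absNorm ⁻¹' {n} : Set (Ideal (𝓞 K)))) :
      zetaTerm K x I = ENNReal.ofReal ((n : ℝ) ^ (-x)) := by
    rw [zetaTerm_apply, show Ideal.absNorm I.1 = n from I.2]
  rw [tsum_congr const, tsum_fintype, Finset.sum_const, Finset.card_univ,
    ← Nat.card_eq_fintype_card, nsmul_eq_mul, ENNReal.ofReal_mul (by positivity),
    ENNReal.ofReal_natCast]
  rfl

lemma dedekindZeta_ofReal {x : ℝ} (hx : x ≠ 0) :
    dedekindZeta K x =
      ↑(∑' n : ℕ, Nat.card {I : Ideal (𝓞 K) // Ideal.absNorm I = n} * (n : ℝ) ^ (-x)) := by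
  rw [Complex.ofReal_tsum]
  refine tsum_congr fun n ↦ ?_
  rcases eq_or_ne n 0 with rfl | hn
  · simp [Real.zero_rpow, hx]
  · rw [LSeries.term_of_ne_zero hn, Complex.ofReal_mul, Complex.ofReal_cpow n.cast_nonneg,
      Complex.ofReal_neg, Complex.cpow_neg, div_eq_mul_inv]
    simp

lemma tendsto_sub_one_mul_tsum_zetaTerm :
    Tendsto (fun x : ℝ ↦ ENNReal.ofReal (x - 1) * ∑' I, zetaTerm K x I) (𝓝[>] 1)
      (𝓝 (ENNReal.ofReal (dedekindZeta_residue K))) := by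
  have hlim : Tendsto (fun x : ℝ ↦ (x - 1) *
      ∑' n : ℕ, Nat.card {I : Ideal (𝓞 K) // Ideal.absNorm I = n} * (n : ℝ) ^ (-x)) (𝓝[>] 1)
      (𝓝 (dedekindZeta_residue K)) := by
    refine ((Complex.continuous_re.tendsto _).comp
      (tendsto_sub_one_mul_dedekindZeta_nhdsGT K)).congr' ?_
    filter_upwards [self_mem_nhdsWithin] with x (hx : 1 < x)
    rw [Function.comp_apply, dedekindZeta_ofReal K (by linarith), ← Complex.ofReal_one,
      ← Complex.ofReal_sub, ← Complex.ofReal_mul, Complex.ofReal_re]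
  refine ((ENNReal.continuous_ofReal.tendsto _).comp hlim).congr' ?_
  filter_upwards [self_mem_nhdsWithin, hlim.eventually_ne (dedekindZeta_residue_ne_zero K)]
    with x (hx : 1 < x) hne
  have hsum : Summable fun n : ℕ ↦
      Nat.card {I : Ideal (𝓞 K) // Ideal.absNorm I = n} * (n : ℝ) ^ (-x) := by
    by_contra h
    exact hne (by rw [tsum_eq_zero_of_not_summable h, mul_zero])
  rw [Function.comp_apply, ENNReal.ofReal_mul (by linarith),
    ENNReal.ofReal_tsum_of_nonneg (fun n ↦ by positivity) hsum, tsum_zetaTerm]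

end Zeta

section DegreeOnePrimes

open Filter Topology IsDedekindDomain
open scoped ENNReal

variable {K : Type*} (L : Type*) [Field K] [NumberField K] [Field L] [NumberField L] [Algebra K L]

/-- The primes of `L` above `v` of residue degree one, i.e. with the same residue field
cardinality as `v`. -/
def degreeOnePrimesAbove (v : HeightOneSpectrum (𝓞 K)) : Set (HeightOneSpectrum (𝓞 L)) :=
  {w | w.asIdeal.LiesOver v.asIdeal ∧ Ideal.absNorm w.asIdeal = Ideal.absNorm v.asIdeal}

variable {L}

lemma eq_of_mem_degreeOnePrimesAbove {v v' : HeightOneSpectrum (𝓞 K)}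
    {w : HeightOneSpectrum (𝓞 L)} (h : w ∈ degreeOnePrimesAbove L v)
    (h' : w ∈ degreeOnePrimesAbove L v') : v = v' :=
  HeightOneSpectrum.ext (h.1.over.trans h'.1.over.symm)

lemma eulerSum_sq_le_tsum_zetaTerm {T : Set (HeightOneSpectrum (𝓞 K))}
    (hT : ∀ v ∈ T, (degreeOnePrimesAbove L v).Nontrivial) {x : ℝ} (hx : x ≠ 0) :
    eulerSum (fun v : T ↦ zetaTerm K x v.1.asIdeal) ^ 2 ≤ ∑' I, zetaTerm L x I := by
  choose q hq q' hq' hne using fun v : T ↦ hT v v.2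
  have inj : (Sum.elim q q').Injective := by
    refine Function.Injective.sumElim
      (fun u v h ↦ Subtype.ext (eq_of_mem_degreeOnePrimesAbove (hq u) (h ▸ hq v)))
      (fun u v h ↦ Subtype.ext (eq_of_mem_degreeOnePrimesAbove (hq' u) (h ▸ hq' v)))
      fun u v h ↦ ?_
    obtain rfl : u = v := Subtype.ext (eq_of_mem_degreeOnePrimesAbove (hq u) (h ▸ hq' v))
    exact hne u h
  rw [← eulerSum_zetaTerm hx, sq, ← eulerSum_sumElim]
  convert eulerSum_comp_le inj _ using 2
  ext (v | v)
  · simp [zetaTerm_apply, (hq v).2]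
  · simp [zetaTerm_apply, (hq' v).2]

lemma exists_tsum_zetaTerm_sq_le
    (h : ∀ᶠ v : HeightOneSpectrum (𝓞 K) in cofinite, (degreeOnePrimesAbove L v).Nontrivial) :
    ∃ C : ℝ≥0∞, C ≠ ∞ ∧ ∀ x : ℝ, 1 ≤ x →
      (∑' I, zetaTerm K x I) ^ 2 ≤ C * ∑' I, zetaTerm L x I := by
  set S := {v : HeightOneSpectrum (𝓞 K) | ¬(degreeOnePrimesAbove L v).Nontrivial}
  have : Finite S := eventually_cofinite.1 h
  refine ⟨eulerSum (fun v : S ↦ zetaTerm K 1 v.1.asIdeal) ^ 2,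
    ENNReal.pow_ne_top (eulerSum_ne_top fun v ↦ zetaTerm_asIdeal_lt_one one_pos v.1),
    fun x hx ↦ ?_⟩
  rw [← eulerSum_zetaTerm (by linarith), eulerSum_eq_mul_compl S, mul_pow]
  gcongr
  · exact eulerSum_mono fun v ↦ zetaTerm_asIdeal_anti hx v.1
  · exact eulerSum_sq_le_tsum_zetaTerm (fun v hv ↦ not_not.1 hv) (by linarith)

variable (L)

theorem frequently_subsingleton_degreeOnePrimesAbove :
    ∃ᶠ v : HeightOneSpectrum (𝓞 K) in cofinite, (degreeOnePrimesAbove L v).Subsingleton := by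
  simp_rw [← Set.not_nontrivial_iff]
  intro h
  obtain ⟨C, hC, hle⟩ := exists_tsum_zetaTerm_sq_le (h.mono fun _ ↦ not_not.1)
  have sub_one_tendsto : Tendsto (fun x : ℝ ↦ ENNReal.ofReal (x - 1)) (𝓝[>] 1) (𝓝 0) :=
    tendsto_nhdsWithin_of_tendsto_nhds <|
      (ENNReal.continuous_ofReal.comp (continuous_sub_right 1)).tendsto' _ _ (by simp)
  have left_tendsto := ENNReal.Tendsto.pow (n := 2) (tendsto_sub_one_mul_tsum_zetaTerm K)
  have right_tendsto := ENNReal.Tendsto.const_mul (ENNReal.Tendsto.mul sub_one_tendsto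
    (.inr ENNReal.ofReal_ne_top) (tendsto_sub_one_mul_tsum_zetaTerm L) (.inr ENNReal.zero_ne_top))
    (.inr hC)
  have residue_sq_le := le_of_tendsto_of_tendsto left_tendsto right_tendsto <| by
    filter_upwards [self_mem_nhdsWithin] with x (hx : 1 < x)
    calc (ENNReal.ofReal (x - 1) * ∑' I, zetaTerm K x I) ^ 2
        ≤ ENNReal.ofReal (x - 1) ^ 2 * (C * ∑' I, zetaTerm L x I) := by
          rw [mul_pow]; gcongr; exact hle x hx.le
      _ = C * (ENNReal.ofReal (x - 1) * (ENNReal.ofReal (x - 1) * ∑' I, zetaTerm L x I)) := by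
          ring
  simp [(dedekindZeta_residue_pos K).not_ge] at residue_sq_le

end DegreeOnePrimes

section Squares

open Filter Topology IsDedekindDomain

variable {K L : Type*} [Field K] [Field L] [Algebra K L]

lemma exists_algEquiv_apply_eq_neg [IsGalois K L] [FiniteDimensional K L] {d : K} {x : L}
    (hx : x * x = algebraMap K L d) (hd : ¬IsSquare d) : ∃ σ : L ≃ₐ[K] L, σ x = -x := by
  have not_fixed : ¬∀ σ : L ≃ₐ[K] L, σ x = x := by
    rw [← IsGalois.mem_bot_iff_fixed, IntermediateField.mem_bot]
    rintro ⟨y, rfl⟩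
    exact hd ⟨y, (algebraMap K L).injective (by rw [map_mul, hx])⟩
  obtain ⟨σ, hσ⟩ := not_forall.1 not_fixed
  refine ⟨σ, (mul_self_eq_mul_self_iff.1 ?_).resolve_left hσ⟩
  rw [← map_mul, hx, σ.commutes]

lemma two_mul_mem_of_mem_iff_apply_mem {R : Type*} [CommRing R] {Q : Ideal R} [Q.IsPrime]
    {τ : R →+* R} (hτ : ∀ x, x ∈ Q ↔ τ x ∈ Q) {d e : R} (hd : τ d = d) (he : τ e = -e)
    (h : e * e - d * d ∈ Q) : 2 * d ∈ Q := by
  rw [mul_self_sub_mul_self] at h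
  rcases Ideal.IsPrime.mem_or_mem ‹_› h with h | h
  · convert add_mem h ((hτ _).1 h) using 1
    rw [map_add, hd, he]
    ring
  · convert neg_mem (add_mem h ((hτ _).1 h)) using 1
    rw [map_sub, hd, he]
    ring

variable [NumberField K] [NumberField L]

lemma mem_degreeOnePrimesAbove_of_ne [Algebra.IsQuadraticExtension K L]
    {v : HeightOneSpectrum (𝓞 K)} {w w' : HeightOneSpectrum (𝓞 L)} (hne : w ≠ w')
    (hw : w.asIdeal.LiesOver v.asIdeal) (hw' : w'.asIdeal.LiesOver v.asIdeal) :
    w ∈ degreeOnePrimesAbove L v := by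
  have two_le_ncard : 2 ≤ (v.asIdeal.primesOver (𝓞 L)).ncard := by
    rw [← Set.ncard_pair (HeightOneSpectrum.asIdeal_injective.ne hne)]
    refine Set.ncard_le_ncard ?_ (Algebra.QuasiFinite.finite_primesOver v.asIdeal)
    simp [Set.insert_subset_iff, Ideal.primesOver, w.isPrime, w'.isPrime, hw, hw']
  have ncard_mul : _ * (_ * v.asIdeal.inertiaDegIn (𝓞 L)) = 2 :=
    (Ideal.ncard_primesOver_mul_ramificationIdxIn_mul_inertiaDegIn v.asIdeal (𝓞 L)
      Gal(L/K)).trans <| (IsGalois.card_aut_eq_finrank K L).trans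
        (Algebra.IsQuadraticExtension.finrank_eq_two K L)
  have ncard_eq_two := (Nat.le_of_dvd two_pos (Dvd.intro _ ncard_mul)).antisymm two_le_ncard
  have inertiaDeg_eq_one : v.asIdeal.inertiaDegIn (𝓞 L) = 1 :=
    Nat.eq_one_of_mul_eq_one_left <|
      Nat.eq_of_mul_eq_mul_left two_pos (ncard_eq_two ▸ ncard_mul)
  refine ⟨hw, ?_⟩
  rw [Ideal.absNorm_eq_pow_inertiaDeg'_of_liesOver w.asIdeal v.asIdeal v.isPrime v.ne_bot,
    Ideal.inertiaDeg'_eq_inertiaDeg, ← Ideal.inertiaDegIn_eq_inertiaDeg v.asIdeal _ Gal(L/K),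
    inertiaDeg_eq_one, pow_one]

lemma nontrivial_degreeOnePrimesAbove [Algebra.IsQuadraticExtension K L] {D : 𝓞 K} {e : 𝓞 L}
    (he : e * e = algebraMap (𝓞 K) (𝓞 L) D) (hD : ¬IsSquare (D : K))
    {v : HeightOneSpectrum (𝓞 K)} (h2v : 2 ∉ v.asIdeal) (hDv : D ∉ v.asIdeal)
    (hsq : IsSquare (Ideal.Quotient.mk v.asIdeal D)) :
    (degreeOnePrimesAbove L v).Nontrivial := by
  obtain ⟨σ, hσ⟩ := exists_algEquiv_apply_eq_neg (x := (e : L)) (congrArg Subtype.val he) hD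
  let τ : 𝓞 L ≃ₐ[𝓞 K] 𝓞 L := RingOfIntegers.mapAlgEquiv σ
  have hτ : τ e = -e := RingOfIntegers.ext hσ
  obtain ⟨d', hd'⟩ := hsq
  obtain ⟨d, rfl⟩ := Ideal.Quotient.mk_surjective d'
  rw [← map_mul, Ideal.Quotient.mk_eq_mk_iff_sub_mem] at hd'
  have two_mul_d_notMem : 2 * d ∉ v.asIdeal := fun h ↦ by
    have hd := (v.isPrime.mem_or_mem h).resolve_left h2v
    exact hDv (by simpa using add_mem hd' (v.asIdeal.mul_mem_left d hd))
  obtain ⟨⟨Q, hQ, hQv⟩⟩ := v.asIdeal.nonempty_primesOver (S := 𝓞 L)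
  let w : HeightOneSpectrum (𝓞 L) := ⟨Q, hQ, Ideal.ne_bot_of_liesOver_of_ne_bot v.ne_bot Q⟩
  have hτQv : (Q.comap τ).LiesOver v.asIdeal := inferInstance
  let w' : HeightOneSpectrum (𝓞 L) :=
    ⟨Q.comap τ, inferInstance, Ideal.ne_bot_of_liesOver_of_ne_bot v.ne_bot (Q.comap τ)⟩
  have hne : w ≠ w' := by
    intro hww'
    have hQτ (x : 𝓞 L) : x ∈ Q ↔ τ x ∈ Q :=
      SetLike.ext_iff.1 (congrArg HeightOneSpectrum.asIdeal hww') x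
    have sub_mem : e * e - algebraMap _ _ d * algebraMap _ _ d ∈ Q := by
      simpa [he] using (Ideal.mem_of_liesOver Q v.asIdeal _).1 hd'
    refine two_mul_d_notMem ((Ideal.mem_of_liesOver Q v.asIdeal _).2 ?_)
    rw [map_mul, map_ofNat]
    exact two_mul_mem_of_mem_iff_apply_mem (τ := τ) hQτ (τ.commutes d) hτ sub_mem
  exact ⟨w, mem_degreeOnePrimesAbove_of_ne hne hQv hτQv, w',
    mem_degreeOnePrimesAbove_of_ne hne.symm hτQv hQv, hne⟩

theorem frequently_not_isSquare {D : 𝓞 K} (hD : ¬IsSquare (D : K)) :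
    ∃ᶠ v : HeightOneSpectrum (𝓞 K) in cofinite, ¬IsSquare (Ideal.Quotient.mk v.asIdeal D) := by
  have : Fact (∀ r : K, r ^ 2 ≠ D + 0 * r) := ⟨fun r hr ↦ hD ⟨r, by linear_combination -hr⟩⟩
  let L := QuadraticAlgebra K (D : K) 0
  have : NumberField L := .of_module_finite K L
  have : Algebra.IsQuadraticExtension K L := ⟨QuadraticAlgebra.finrank_eq_two _ _⟩
  have omega_sq : (QuadraticAlgebra.omega : L) * QuadraticAlgebra.omega = algebraMap K L D := by
    rw [QuadraticAlgebra.omega_mul_omega_eq_mk, QuadraticAlgebra.algebraMap_eq]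
  have omega_isIntegral : IsIntegral ℤ (QuadraticAlgebra.omega : L) := by
    refine .of_pow two_pos ?_
    rw [sq, omega_sq]
    exact (RingOfIntegers.isIntegral_coe D).map (algebraMap K L).toIntAlgHom
  let e : 𝓞 L := ⟨QuadraticAlgebra.omega, omega_isIntegral⟩
  have he : e * e = algebraMap (𝓞 K) (𝓞 L) D := RingOfIntegers.ext omega_sq
  have hD₀ : D ≠ 0 := by
    rintro rfl
    exact hD (by simp)
  refine (frequently_subsingleton_degreeOnePrimesAbove L).mp ?_
  filter_upwards [eventually_notMem_asIdeal two_ne_zero, eventually_notMem_asIdeal hD₀]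
    with v h2v hDv hv hsq
  exact Set.not_nontrivial_iff.2 hv (nontrivial_degreeOnePrimesAbove he hD h2v hDv hsq)

lemma not_isUnit_of_forall_one_lt {x : 𝓞 K} (hx : ∀ w : InfinitePlace K, 1 < w (x : K)) :
    ¬IsUnit x := by
  rintro ⟨u, rfl⟩
  refine (Finset.sum_pos (fun w _ ↦ ?_) Finset.univ_nonempty).ne' (Units.sum_mult_mul_log u)
  exact mul_pos (mod_cast w.mult_pos) (Real.log_pos (hx w))

lemma exists_not_isUnit_mul_sq_sub_one {c : 𝓞 K} (hc : c ≠ 0) :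
    ∃ k : ℕ, ¬IsUnit (c * (k : 𝓞 K) ^ 2 - 1) := by
  have eventually_one_lt (w : InfinitePlace K) :
      ∀ᶠ k : ℕ in atTop, 1 < w ((c * (k : 𝓞 K) ^ 2 - 1 : 𝓞 K) : K) := by
    have hw : 0 < w (c : K) := InfinitePlace.pos_iff.2 (by simpa)
    have lower_tendsto : Tendsto (fun k : ℕ ↦ w (c : K) * (k : ℝ) ^ 2 - 1) atTop atTop :=
      tendsto_atTop_add_const_right _ _ <| .const_mul_atTop hw <|
        (tendsto_pow_atTop two_ne_zero).comp tendsto_natCast_atTop_atTop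
    filter_upwards [lower_tendsto.eventually_gt_atTop 1] with k hk
    have hle : w (c * (k : K) ^ 2) - w 1 ≤ w (c * (k : K) ^ 2 - 1) := w.1.le_sub _ _
    have hwk : w (k : K) = k := by simp [← InfinitePlace.norm_embedding_eq]
    rw [map_mul, map_pow, map_one, hwk] at hle
    exact hk.trans_le (by simpa using hle)
  obtain ⟨k, hk⟩ := (eventually_all.2 eventually_one_lt).exists
  exact ⟨k, not_isUnit_of_forall_one_lt hk⟩

theorem frequently_isSquare {D : 𝓞 K} (hD : D ≠ 0) :
    ∃ᶠ v : HeightOneSpectrum (𝓞 K) in cofinite, IsSquare (Ideal.Quotient.mk v.asIdeal D) := by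
  refine frequently_of_forall_exists_notMem fun b hb ↦ ?_
  obtain ⟨k, hk⟩ := exists_not_isUnit_mul_sq_sub_one (mul_ne_zero hD (pow_ne_zero 2 hb))
  obtain ⟨P, hP, hkP⟩ := exists_max_ideal_of_mem_nonunits hk
  refine ⟨⟨P, hP.isPrime, Ring.ne_bot_of_isMaximal_of_not_isField hP
    (RingOfIntegers.not_isField K)⟩, fun hbP ↦ hP.ne_top ((Ideal.eq_top_iff_one P).2 ?_),
    ⟨Ideal.Quotient.mk P (D * b * k), ?_⟩⟩
  · convert sub_mem (P.mul_mem_left (D * b * k ^ 2) hbP) hkP using 1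
    ring
  · rw [← map_mul, Ideal.Quotient.mk_eq_mk_iff_sub_mem]
    convert P.mul_mem_left (-D) hkP using 1
    ring

end Squares

section Uniqueness

open Filter IsDedekindDomain

variable {K : Type*} [Field K] [NumberField K] {s π : 𝓞 K}

lemma IsOfClass.eq_zero_of_eventually_mem {W : ℕ → 𝓞 K} (hs : s ≠ 0)
    (hD : ¬IsSquare (algebraMap (𝓞 K) K (s ^ 2 - 4 * π))) (hW : IsOfClass s π W)
    (hmem : ∀ᶠ v : HeightOneSpectrum (𝓞 K) in cofinite,
      W (Nat.card (𝓞 K ⧸ v.asIdeal)) ∈ v.asIdeal) : W = 0 := by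
  have hD₀ : s ^ 2 - 4 * π ≠ 0 := fun h ↦ hD (by simp [h])
  have finite_quotient (v : HeightOneSpectrum (𝓞 K)) : Finite (𝓞 K ⧸ v.asIdeal) :=
    Ideal.finiteQuotientOfFreeOfNeBot v.asIdeal v.ne_bot
  have W_one : W 1 = 0 := by
    refine eq_zero_of_frequently_mem_asIdeal ((frequently_isSquare hD₀).mp ?_)
    filter_upwards [hmem, eventually_notMem_asIdeal two_ne_zero, eventually_notMem_asIdeal hD₀]
      with v hv h2 hDv hsq
    exact (Submodule.sub_mem_iff_right _ hv).1
      (hW.apply_card_quotient_sub_mem_of_isSquare h2 hDv hsq)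
  have sub_W_one : s * W 0 - W 1 = 0 := by
    refine eq_zero_of_frequently_mem_asIdeal ((frequently_not_isSquare hD).mp ?_)
    filter_upwards [hmem, eventually_notMem_asIdeal two_ne_zero] with v hv h2 hsq
    exact (Submodule.sub_mem_iff_right _ hv).1
      (hW.apply_card_quotient_sub_mem_of_not_isSquare h2 hsq)
  exact hW.eq_zero (by simpa [W_one, hs] using sub_W_one) W_one

theorem order_two_sequences_unique_from_prime_congruences_general {U V : ℕ → 𝓞 K} (hs : s ≠ 0)
    (hD : ¬IsSquare (algebraMap (𝓞 K) K (s ^ 2 - 4 * π)))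
    (hU : IsOfClass s π U) (hV : IsOfClass s π V)
    (hcong : ∀ᶠ v : HeightOneSpectrum (𝓞 K) in cofinite,
      U (Nat.card (𝓞 K ⧸ v.asIdeal)) - V (Nat.card (𝓞 K ⧸ v.asIdeal)) ∈ v.asIdeal) :
    U = V :=
  sub_eq_zero.1 ((hU.sub hV).eq_zero_of_eventually_mem hs hD hcong)

end Uniqueness

/-- **Corollary 19 (uniqueness for order-two recurrences).**  Let `K` be a number field,
`s, π ∈ 𝓞 K` with `s ≠ 0` and `Δ = s² - 4π` not a square in `K`.  If two sequences
`U, V : ℕ → 𝓞 K` of class `C = X² - sX + π` satisfy `U_p ≡ V_p (mod P)` for every prime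
`P` of `𝓞 K` with `Δ ∉ P` (where `p = |𝓞 K / P|`), then `U = V`. -/
theorem order_two_sequences_unique_from_prime_congruences
    {K : Type*} [Field K] [NumberField K]
    (s π : 𝓞 K) (hs : s ≠ 0) (Δ : 𝓞 K) (hΔdef : Δ = s ^ 2 - 4 * π)
    (hΔ : ¬ IsSquare (algebraMap (𝓞 K) K Δ))
    (U V : ℕ → 𝓞 K)
    (hU : ∀ n : ℕ, U (n + 2) - s * U (n + 1) + π * U n = 0)
    (hV : ∀ n : ℕ, V (n + 2) - s * V (n + 1) + π * V n = 0)
    (hcong : ∀ P : Ideal (𝓞 K), P.IsPrime → P ≠ ⊥ → Δ ∉ P →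
      U (Nat.card (𝓞 K ⧸ P)) - V (Nat.card (𝓞 K ⧸ P)) ∈ P) :
    ∀ n : ℕ, U n = V n := by
  subst hΔdef
  have hΔ₀ : s ^ 2 - 4 * π ≠ 0 := fun h ↦ hΔ (by simp [h])
  exact congrFun <| order_two_sequences_unique_from_prime_congruences_general hs hΔ hU hV <|
    (eventually_notMem_asIdeal hΔ₀).mono fun v ↦ hcong v.asIdeal v.isPrime v.ne_bot
end

section
/- With the number-field setup below, let Λ be a conjugacy class of Gal(E/K) with λ := card(Λ), and Ω_{Λ;k}(R) := ∏_{s∈Λ} (R − Ψ_k(s)) for 0 ≤ k ≤ d−1. Let P be a prime ideal of A with Δ_C ∉ P, set p := |A/P|, and suppose there exist a prime ideal Q of B lying above P and s ∈ Λ such that s(x) ≡ x^p (mod Q) for all x ∈ B. Let r_k(p) ∈ A be the coefficient of X^k in the remainder of the division of X^p by C in A[X]. Then for each k with 0 ≤ k ≤ d−1, Δ_C^λ · Ω_{Λ;k}(r_k(p)) ∈ P. -/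
open Polynomial NumberField

/-!
By Cramer's rule for the Vandermonde system, `Δ` times the coefficients of the polynomial of degree
`< d` with prescribed values at `x₁, …, x_d` are linear forms in these values with coefficients in
`ℤ[x₁, …, x_d]`, invariant under simultaneous permutation of nodes and values. By integrality,
the congruences `s(xᵢ) ≡ xᵢ ^ p` give `Δ Ψ_k(s) ≡ Δ r_k(p)` modulo `Q`, so one factor of
`∏_{t ∈ Λ} (Δ r_k(p) - Δ Ψ_k(t))` lies in `Q`. By symmetry, Galois automorphisms permute the
factors by conjugating `t`, so the product comes from the base ring.
-/

section Interpolation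

variable {R S : Type*} [CommRing R] [CommRing S] {d : ℕ}

/-- The coefficients of the polynomial of degree `< d` with values `y` at the nodes `x`, multiplied
by the discriminant `(det V)²` of the nodes, where `V` is their Vandermonde matrix. The vector
`V.cramer y` is already free of denominators; the second factor `det V` makes the result symmetric
in the nodes. -/
noncomputable def discrInterp (x : Fin d → R) : (Fin d → R) →ₗ[R] (Fin d → R) :=
  (Matrix.vandermonde x).det • (Matrix.vandermonde x).cramer

theorem discrInterp_apply (x y : Fin d → R) (k : Fin d) :
    discrInterp x y k =
      (Matrix.vandermonde x).det * ((Matrix.vandermonde x).updateCol k y).det :=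
  rfl

theorem det_vandermonde_sq (x : Fin d → R) :
    (Matrix.vandermonde x).det ^ 2 =
      ∏ q ∈ Finset.univ.filter (fun q : Fin d × Fin d => q.1 < q.2), (x q.1 - x q.2) ^ 2 := by
  rw [Matrix.det_vandermonde, Finset.prod_filter, Fintype.prod_prod_type, ← Finset.prod_pow]
  refine Finset.prod_congr rfl fun i _ => ?_
  rw [← Finset.prod_filter, ← Finset.prod_pow, Finset.filter_lt_eq_Ioi]
  exact Finset.prod_congr rfl fun j _ => sub_sq_comm (x j) (x i)

theorem vandermonde_mulVec_coeff (x : Fin d → R) {F : R[X]} (hF : F.degree < d) :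
    (Matrix.vandermonde x).mulVec (fun j => F.coeff j) = fun i => F.eval (x i) := by
  funext i
  rw [eval_eq_sum, ← sum_fin (fun j a => a * x i ^ j) (fun _ => zero_mul _) hF]
  simp only [Matrix.mulVec, dotProduct, Matrix.vandermonde_apply, mul_comm]

theorem discrInterp_eval (x : Fin d → R) {F : R[X]} (hF : F.degree < d) (k : Fin d) :
    discrInterp x (fun i => F.eval (x i)) k = (Matrix.vandermonde x).det ^ 2 * F.coeff k := by
  have hcramer : (Matrix.vandermonde x).cramer (fun i => F.eval (x i)) =
      (Matrix.vandermonde x).det • fun j : Fin d => F.coeff j := by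
    rw [Matrix.cramer_eq_adjugate_mulVec, ← vandermonde_mulVec_coeff x hF, Matrix.mulVec_mulVec,
      Matrix.adjugate_mul, Matrix.smul_mulVec, Matrix.one_mulVec]
  simp only [discrInterp, LinearMap.smul_apply, hcramer, Pi.smul_apply, smul_eq_mul, sq, mul_assoc]

theorem vandermonde_comp (f : R →+* S) (x : Fin d → R) :
    Matrix.vandermonde (f ∘ x) = (Matrix.vandermonde x).map f := by
  ext i j
  simp [Matrix.vandermonde_apply]

theorem map_discrInterp (f : R →+* S) (x y : Fin d → R) (k : Fin d) :
    f (discrInterp x y k) = discrInterp (f ∘ x) (f ∘ y) k := by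
  simp only [discrInterp_apply, vandermonde_comp, ← Matrix.map_updateCol, map_mul, RingHom.map_det,
    RingHom.mapMatrix_apply]

theorem map_discrInterp_of_eval_eq (f : R →+* S) {x y : Fin d → R} {F : S[X]} (hF : F.degree < d)
    (hFeval : ∀ i, F.eval (f (x i)) = f (y i)) (k : Fin d) :
    f (discrInterp x y k) = f ((Matrix.vandermonde x).det ^ 2) * F.coeff k := by
  have hV : f (Matrix.vandermonde x).det = (Matrix.vandermonde (f ∘ x)).det := by
    rw [vandermonde_comp, RingHom.map_det, RingHom.mapMatrix_apply]
  have hvalues : f ∘ y = fun i => F.eval ((f ∘ x) i) := funext fun i => (hFeval i).symm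
  rw [map_discrInterp, hvalues, discrInterp_eval _ hF, map_pow, hV]

theorem discrInterp_comp_perm (x y : Fin d → R) (π : Equiv.Perm (Fin d)) :
    discrInterp (x ∘ π) (y ∘ π) = discrInterp x y := by
  funext k
  have hV : Matrix.vandermonde (x ∘ π) = (Matrix.vandermonde x).submatrix π id := rfl
  have hupdate : (Matrix.vandermonde (x ∘ π)).updateCol k (y ∘ π) =
      ((Matrix.vandermonde x).updateCol k y).submatrix π id := by
    ext i j
    simp [Matrix.updateCol_apply, hV]
  have hsign : (π.sign : R) * π.sign = 1 := by
    exact_mod_cast congrArg (Int.cast : ℤ → R) (Int.units_coe_mul_self π.sign)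
  rw [discrInterp_apply, discrInterp_apply, hupdate, hV, Matrix.det_permute, Matrix.det_permute,
    mul_mul_mul_comm, hsign, one_mul]

end Interpolation

section SplitPolynomial

variable {A B : Type*} [CommRing A] [CommRing B] [Algebra A B] {d : ℕ} {f : A[X]} {x : Fin d → B}

theorem degree_eq_of_map_eq_prod_X_sub_C [Nontrivial B] (hf : f.Monic)
    (hsplit : f.map (algebraMap A B) = ∏ i, (X - C (x i))) : f.degree = d := by
  rw [← hf.degree_map (algebraMap A B), hsplit, degree_prod_of_monic _ _ fun i _ => monic_X_sub_C _]
  simp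

theorem aeval_eq_prod_sub (hsplit : f.map (algebraMap A B) = ∏ i, (X - C (x i))) (b : B) :
    aeval b f = ∏ i, (b - x i) := by
  rw [← eval_map_algebraMap, hsplit, eval_prod]
  simp only [eval_sub, eval_X, eval_C]

theorem aeval_root_eq_zero (hsplit : f.map (algebraMap A B) = ∏ i, (X - C (x i))) (i : Fin d) :
    aeval (x i) f = 0 := by
  rw [aeval_eq_prod_sub hsplit]
  exact Finset.prod_eq_zero (Finset.mem_univ i) (sub_self _)

theorem discrInterp_aeval [Nontrivial B] (hf : f.Monic)
    (hsplit : f.map (algebraMap A B) = ∏ i, (X - C (x i))) (g : A[X]) (k : Fin d) :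
    discrInterp x (fun i => aeval (x i) g) k =
      (Matrix.vandermonde x).det ^ 2 * algebraMap A B ((g %ₘ f).coeff k) := by
  have := (algebraMap A B).domain_nontrivial
  have hdeg : ((g %ₘ f).map (algebraMap A B)).degree < d :=
    degree_map_le.trans_lt <|
      degree_eq_of_map_eq_prod_X_sub_C hf hsplit ▸ degree_modByMonic_lt g hf
  rw [← coeff_map, ← discrInterp_eval x hdeg]
  simp only [eval_map_algebraMap, aeval_modByMonic_eq_self_of_root (aeval_root_eq_zero hsplit _)]

variable {G : Type*} [Group G] [MulSemiringAction G B] [SMulCommClass G A B]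

theorem exists_perm_smul_eq_comp [IsDomain B] (hx : Function.Injective x)
    (hsplit : f.map (algebraMap A B) = ∏ i, (X - C (x i))) (σ : G) :
    ∃ π : Equiv.Perm (Fin d), σ • x = x ∘ π := by
  have hroot (i : Fin d) : ∃ j, σ • x i = x j := by
    have hzero : aeval (σ • x i) f = 0 := by
      rw [aeval_smul, aeval_root_eq_zero hsplit, smul_zero]
    rw [aeval_eq_prod_sub hsplit] at hzero
    obtain ⟨j, -, hj⟩ := Finset.prod_eq_zero_iff.1 hzero
    exact ⟨j, sub_eq_zero.1 hj⟩
  choose π hπ using hroot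
  have hπinj : Function.Injective π := fun i j hij =>
    hx <| smul_left_cancel σ <| by rw [hπ, hπ, hij]
  exact ⟨.ofBijective π (Finite.injective_iff_bijective.1 hπinj), funext hπ⟩

theorem smul_discrInterp_smul [IsDomain B] (hx : Function.Injective x)
    (hsplit : f.map (algebraMap A B) = ∏ i, (X - C (x i))) (σ t : G) (k : Fin d) :
    σ • discrInterp x (t • x) k = discrInterp x ((σ * t * σ⁻¹) • x) k := by
  obtain ⟨π, hπ⟩ := exists_perm_smul_eq_comp hx hsplit σ
  have hvalues : σ • t • x = ((σ * t * σ⁻¹) • x) ∘ π := by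
    calc σ • t • x = (σ * t * σ⁻¹) • σ • x := by simp only [smul_smul, inv_mul_cancel_right]
      _ = ((σ * t * σ⁻¹) • x) ∘ π := by rw [hπ]; rfl
  calc σ • discrInterp x (t • x) k = discrInterp (σ • x) (σ • t • x) k :=
        map_discrInterp (MulSemiringAction.toRingHom G B σ) x (t • x) k
    _ = discrInterp x ((σ * t * σ⁻¹) • x) k := by rw [hvalues, hπ, discrInterp_comp_perm]

end SplitPolynomial

theorem exists_algebraMap_eq_prod_of_smul_eq_conj {A B G : Type*} [CommRing A] [CommRing B]
    [Algebra A B] [Group G] [MulSemiringAction G B] [Algebra.IsInvariant A B G]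
    {Λ : Finset G} (hΛ : ∀ σ : G, ∀ t ∈ Λ, σ * t * σ⁻¹ ∈ Λ)
    {φ : G → B} (hφ : ∀ σ t : G, σ • φ t = φ (σ * t * σ⁻¹)) :
    ∃ a : A, algebraMap A B a = ∏ t ∈ Λ, φ t := by
  refine Algebra.IsInvariant.isInvariant (G := G) _ fun σ => ?_
  rw [Finset.smul_prod']
  refine Finset.prod_nbij' (fun t => σ * t * σ⁻¹) (fun t => σ⁻¹ * t * σ) (hΛ σ) ?_ ?_ ?_ ?_
  · exact fun t ht => by simpa only [inv_inv] using hΛ σ⁻¹ t ht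
  · exact fun t _ => by group
  · exact fun t _ => by group
  · exact fun t _ => hφ σ t

theorem conjugacy_class_polynomial_congruence_general
    {A B E G : Type*} [CommRing A] [CommRing B] [IsDomain B] [CommRing E]
    [Algebra A B] [Algebra B E] [Algebra A E] [IsScalarTower A B E]
    [Group G] [MulSemiringAction G B] [SMulCommClass G A B] [Algebra.IsInvariant A B G]
    {d : ℕ} {f : A[X]} (hf : f.Monic) {x : Fin d → B} (hx : Function.Injective x)
    (hsplit : f.map (algebraMap A B) = ∏ i, (X - C (x i)))
    {Δ : A} (hΔ : algebraMap A B Δ =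
      ∏ q ∈ Finset.univ.filter (fun q : Fin d × Fin d => q.1 < q.2), (x q.1 - x q.2) ^ 2)
    {Ψ : G → E[X]} (hΨdeg : ∀ t, (Ψ t).degree < d)
    (hΨeval : ∀ t i, (Ψ t).eval (algebraMap B E (x i)) = algebraMap B E (t • x i))
    {Λ : Finset G} (hΛ : ∀ σ : G, ∀ t ∈ Λ, σ * t * σ⁻¹ ∈ Λ)
    {Q : Ideal B} {s : G} (hs : s ∈ Λ) {g : A[X]} (hg : ∀ i, s • x i - aeval (x i) g ∈ Q)
    (k : Fin d) :
    ∃ a ∈ Q.under A, algebraMap A E a =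
      algebraMap A E Δ ^ Λ.card *
        (∏ t ∈ Λ, (X - C ((Ψ t).coeff k))).eval (algebraMap A E ((g %ₘ f).coeff k)) := by
  set r : A := (g %ₘ f).coeff k
  rw [← det_vandermonde_sq] at hΔ
  have hΨcoeff (t : G) :
      algebraMap B E (discrInterp x (t • x) k) = algebraMap A E Δ * (Ψ t).coeff k := by
    rw [IsScalarTower.algebraMap_apply A B E, hΔ]
    exact map_discrInterp_of_eval_eq _ (hΨdeg t) (hΨeval t) k
  have hr : discrInterp x (fun i => aeval (x i) g) k = algebraMap A B (Δ * r) := by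
    rw [discrInterp_aeval hf hsplit, map_mul, hΔ]
  have hfactor : algebraMap A B (Δ * r) - discrInterp x (s • x) k ∈ Q := by
    rw [← hr, ← Pi.sub_apply, ← map_sub]
    exact Q.map_pi _ (fun i => sub_mem_comm_iff.1 (hg i)) _ k
  obtain ⟨a, ha⟩ := exists_algebraMap_eq_prod_of_smul_eq_conj (A := A) hΛ
    (φ := fun t => algebraMap A B (Δ * r) - discrInterp x (t • x) k) fun σ t => by
      rw [smul_sub, smul_algebraMap, smul_discrInterp_smul hx hsplit]
  refine ⟨a, ?_, ?_⟩
  · rw [Ideal.under_def, Ideal.mem_comap, ha]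
    exact Q.mem_of_dvd (Finset.dvd_prod_of_mem _ hs) hfactor
  · rw [IsScalarTower.algebraMap_apply A B E, ha, map_prod, eval_prod, ← Finset.prod_const,
      ← Finset.prod_mul_distrib]
    refine Finset.prod_congr rfl fun t _ => ?_
    rw [map_sub, hΨcoeff, ← IsScalarTower.algebraMap_apply, map_mul, eval_sub, eval_X, eval_C,
      mul_sub]

/-- **Theorem 24, point 3.**  Set-up: `E/K` Galois extension of number fields,
`C ∈ 𝓞 K [X]` monic of degree `d ≥ 2` with distinct roots `x₁,…,x_d ∈ 𝓞 E` generating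
`E/K`, `Δ` its discriminant; `Ψ_s` the root-permuting polynomials, `Λ` a conjugacy class
of `Gal(E/K)` with `λ = card Λ`, and `Ω_{Λ;k}(R) = ∏_{s∈Λ}(R - Ψ_k(s))`.  Let `P` be a
prime of `𝓞 K` with `Δ ∉ P`, `p = |𝓞 K / P|`, and suppose some prime `Q` of `𝓞 E` above
`P` and some `s ∈ Λ` satisfy `s(x) ≡ x^p (mod Q)` for all `x ∈ 𝓞 E`.  If `r_k(p)` denotes
the coefficient of `X^k` in `X^p mod C`, then `Δ^λ·Ω_{Λ;k}(r_k(p)) ∈ P`. -/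
theorem conjugacy_class_polynomial_congruence
    {K E : Type*} [Field K] [NumberField K] [Field E] [NumberField E]
    [Algebra K E] [IsGalois K E]
    (d : ℕ) (hd : 2 ≤ d)
    (C : Polynomial (𝓞 K)) (hC : C.Monic) (hdeg : C.natDegree = d)
    (x : Fin d → 𝓞 E) (hxinj : Function.Injective x)
    (hsplit : C.map (algebraMap (𝓞 K) (𝓞 E)) = ∏ i, (X - Polynomial.C (x i)))
    (hgen : IntermediateField.adjoin K
      (Set.range fun i => (algebraMap (𝓞 E) E (x i))) = ⊤)
    (Δ : 𝓞 K)
    (hΔ : algebraMap (𝓞 K) (𝓞 E) Δ =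
      ∏ q ∈ Finset.univ.filter (fun q : Fin d × Fin d => q.1 < q.2), (x q.1 - x q.2) ^ 2)
    (Ψ : (E ≃ₐ[K] E) → Polynomial E)
    (hΨdeg : ∀ σ : E ≃ₐ[K] E, (Ψ σ).degree < d)
    (hΨeval : ∀ (σ : E ≃ₐ[K] E) (i : Fin d),
      (Ψ σ).eval (algebraMap (𝓞 E) E (x i)) = σ (algebraMap (𝓞 E) E (x i)))
    (σ₀ : E ≃ₐ[K] E) (Λ : Finset (E ≃ₐ[K] E))
    (hΛ : ∀ τ : E ≃ₐ[K] E, τ ∈ Λ ↔ IsConj σ₀ τ)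
    (P : Ideal (𝓞 K)) (hPprime : P.IsPrime) (hPbot : P ≠ ⊥) (hPΔ : Δ ∉ P)
    (p : ℕ) (hp : p = Nat.card (𝓞 K ⧸ P))
    (Q : Ideal (𝓞 E)) (hQprime : Q.IsPrime)
    (hQP : Ideal.comap (algebraMap (𝓞 K) (𝓞 E)) Q = P)
    (s : E ≃ₐ[K] E) (hsΛ : s ∈ Λ)
    (hFrob : ∀ b : 𝓞 E, ∃ q ∈ Q, algebraMap (𝓞 E) E q =
      s (algebraMap (𝓞 E) E b) - (algebraMap (𝓞 E) E b) ^ p)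
    (k : ℕ) (hk : k < d) :
    ∃ a : 𝓞 K, a ∈ P ∧
      algebraMap (𝓞 K) E a =
        (algebraMap (𝓞 K) E Δ) ^ Λ.card *
          (∏ t ∈ Λ, (X - Polynomial.C ((Ψ t).coeff k))).eval
            (algebraMap (𝓞 K) E ((X ^ p %ₘ C).coeff k)) := by
  subst hQP
  have hΛconj (σ t) (ht : t ∈ Λ) : σ * t * σ⁻¹ ∈ Λ :=
    (hΛ _).2 (((hΛ t).1 ht).trans (isConj_iff.2 ⟨σ, rfl⟩))
  have hFrobRoot (i : Fin d) : s • x i - aeval (x i) (X ^ p : (𝓞 K)[X]) ∈ Q := by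
    obtain ⟨q, hq, hqeq⟩ := hFrob (x i)
    have hqdef : q = s • x i - x i ^ p := RingOfIntegers.coe_injective <| by
      rw [hqeq, map_sub, map_pow]
      rfl
    rwa [map_pow, aeval_X, ← hqdef]
  exact conjugacy_class_polynomial_congruence_general hC hxinj hsplit hΔ hΨdeg hΨeval hΛconj hsΛ
    hFrobRoot ⟨k, hk⟩
end
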